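/- arXiv:2011.12604 — 2 statements merged into one kernel-verified Lean document; each statement's English description precedes it below -/
import Mathlib

section
/- Let R be a nonempty convex compact subset of R^n and let ρ : R × R → R be continuous in its first argument for each fixed second argument, lower semicontinuous jointly in both arguments, and convex in its second argument for each fixed first argument. Then the set-valued map ζ : R ⇉ R defined by ζ(x) = argmin_{z ∈ R} ρ(x, z) has a fixed point, i.e., there exists x̃ ∈ R with x̃ ∈ ζ(x̃). -/
/-!
Scarf's pivoting argument, a parity count in the spirit of Sperner's lemma, shows that for every
colouring of a finite set of points of the simplex there is a dominant set of points which,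
together with slack points, carries all colours. On a fine net of the simplex such a set is small,
and in the limit a closed cover `(A i)` of the simplex has a point lying in `A i` for every `i` in
its support. Applied to the sets `B i` of points from which `A i` is the farthest of the `A j`,
this gives the Knaster–Kuratowski–Mazurkiewicz lemma, and with it Ky Fan's theorem that the closed
sets attached to the points of a compact convex set by a KKM map have a common point. A best reply
to itself is a common point of the sets `{x ∈ R | ρ x x ≤ ρ x w}`, `w ∈ R`; they are closed by
semicontinuity, and they form a KKM map because `x` cannot be a convex combination of points `w`
with `ρ x w < ρ x x`.
-/

section EraseImage

open Finset

variable {α β : Type*} [DecidableEq α] [DecidableEq β] {s : Finset α} {f : α → β}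

theorem image_erase_eq_image_iff {x : α} (hx : x ∈ s) :
    (s.erase x).image f = s.image f ↔ ∃ z ∈ s, z ≠ x ∧ f z = f x := by
  conv_lhs => rw [← insert_erase hx, image_insert, erase_insert (notMem_erase x s), eq_comm,
    insert_eq_self, mem_image]
  simp only [mem_erase, and_assoc, and_left_comm]

theorem card_filter_image_erase_eq_two (h : #(s.image f) + 1 = #s) :
    #{x ∈ s | (s.erase x).image f = s.image f} = 2 := by
  obtain ⟨a, ha, b, hb, hab, hfab⟩ := exists_ne_map_eq_of_card_lt_of_maps_to
    (s := s) (t := s.image f) (by omega) (fun x hx => mem_image_of_mem f hx)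
  have himage : (s.erase a).image f = s.image f :=
    (image_erase_eq_image_iff ha).2 ⟨b, hb, hab.symm, hfab.symm⟩
  have hinj : Set.InjOn f (s.erase a) := by
    rw [← card_image_iff, himage, card_erase_of_mem ha]
    omega
  refine card_eq_two.2 ⟨a, b, hab, ?_⟩
  ext x
  rw [mem_filter, mem_insert, mem_singleton]
  constructor
  · rintro ⟨hx, himage_x⟩
    obtain ⟨z, hz, hzx, hfz⟩ := (image_erase_eq_image_iff hx).1 himage_x
    by_contra! hne
    have hxa : x ∈ s.erase a := mem_erase.2 ⟨hne.1, hx⟩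
    rcases eq_or_ne z a with rfl | hza
    · exact hne.2 (hinj hxa (mem_erase.2 ⟨hab.symm, hb⟩) (hfz.symm.trans hfab))
    · exact hzx (hinj (mem_erase.2 ⟨hza, hz⟩) hxa hfz)
  · rintro (rfl | rfl)
    · exact ⟨ha, himage⟩
    · exact ⟨hb, (image_erase_eq_image_iff hb).2 ⟨a, ha, hab, hfab⟩⟩

end EraseImage

section Scarf

open Finset

variable {I V α : Type*} [LinearOrder α] {u : I → V → α} {S : Finset V} {i j : I} {x y : V}

/-- Scarf's dominance: with respect to the preferences `u i`, no point of `V` strictly exceeds the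
minimum of `S` in every coordinate `i` at once. -/
def IsDominant (u : I → V → α) (S : Finset V) : Prop :=
  ∀ y, ∃ i, ∀ x ∈ S, u i y ≤ u i x

/-- The point `y` strictly exceeds the minimum of `S` in every coordinate except possibly `j`. -/
def ExceedsExcept (u : I → V → α) (S : Finset V) (j : I) (y : V) : Prop :=
  ∀ i, i ≠ j → ∃ z ∈ S, u i z < u i y

/-- A pivot in direction `j` is a `u j`-best point among those exceeding `S` in all the other
coordinates; it is the point entering `S` in Scarf's replacement step. -/
def IsPivot (u : I → V → α) (S : Finset V) (j : I) (x : V) : Prop :=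
  ExceedsExcept u S j x ∧ ∀ y, ExceedsExcept u S j y → u j y ≤ u j x

/-- The coordinate `j` is redundant for `S` if each point of `S` is the minimum of `S` in some
coordinate other than `j`. -/
def IsRedundant (u : I → V → α) (S : Finset V) (j : I) : Prop :=
  ∀ z ∈ S, ∃ i, i ≠ j ∧ ∀ w ∈ S, u i z ≤ u i w

theorem IsDominant.mono {T : Finset V} (hT : IsDominant u T) (hST : S ⊆ T) : IsDominant u S :=
  fun y => (hT y).imp fun _ hi x hx => hi x (hST hx)

theorem IsPivot.isDominant_insert [DecidableEq V] (hx : IsPivot u S j x) (hS : IsDominant u S) :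
    IsDominant u (insert x S) := by
  intro y
  by_cases hy : ExceedsExcept u S j y
  · obtain ⟨i, hi⟩ := hS y
    obtain rfl : i = j := by
      by_contra hij
      obtain ⟨z, hz, hzy⟩ := hy i hij
      exact (hi z hz).not_gt hzy
    exact ⟨i, forall_mem_insert _ _ _ |>.2 ⟨hx.2 y hy, hi⟩⟩
  · simp only [ExceedsExcept] at hy
    push Not at hy
    obtain ⟨i, hij, hi⟩ := hy
    obtain ⟨z, hz, hzx⟩ := hx.1 i hij
    exact ⟨i, forall_mem_insert _ _ _ |>.2 ⟨(hi z hz).trans hzx.le, hi⟩⟩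

theorem IsPivot.notMem (hx : IsPivot u S j x) (hj : IsRedundant u S j) : x ∉ S := fun hxS => by
  obtain ⟨i, hij, hi⟩ := hj x hxS
  obtain ⟨z, hz, hzx⟩ := hx.1 i hij
  exact (hi z hz).not_gt hzx

theorem IsPivot.direction_unique (hS : IsDominant u S) (hi : IsPivot u S i x)
    (hj : IsPivot u S j x) : i = j := by
  by_contra hij
  obtain ⟨k, hk⟩ := hS x
  obtain ⟨z, hz, hzx⟩ : ∃ z ∈ S, u k z < u k x := by
    rcases eq_or_ne k i with rfl | hki
    · exact hj.1 k hij
    · exact hi.1 k hki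
  exact (hk z hz).not_gt hzx

theorem exists_isPivot [Finite V] (h : ∃ y, ExceedsExcept u S j y) : ∃ x, IsPivot u S j x :=
  Set.exists_max_image {y | ExceedsExcept u S j y} (u j) (Set.toFinite _) h

theorem IsDominant.eq_of_forall_le [Fintype I] (hu : ∀ i, Function.Injective (u i))
    (hS : IsDominant u S) (hcard : #S = Fintype.card I) (hx : x ∈ S)
    (hi : ∀ z ∈ S, u i x ≤ u i z) (hj : ∀ z ∈ S, u j x ≤ u j z) : i = j := by
  choose κ hκ using fun z : S => hS z
  have hinj : Function.Injective κ := fun z w hzw => Subtype.ext <| hu (κ z) <|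
    (hκ z w w.2).antisymm (hzw ▸ hκ w z z.2)
  have hsurj : Function.Surjective κ :=
    ((Fintype.bijective_iff_injective_and_card κ).2 ⟨hinj, by rw [Fintype.card_coe, hcard]⟩).2
  have index_eq : ∀ k, (∀ z ∈ S, u k x ≤ u k z) → k = κ ⟨x, hx⟩ := fun k hk => by
    obtain ⟨z, rfl⟩ := hsurj k
    exact congrArg κ (Subtype.ext (hu _ ((hκ z x hx).antisymm (hk z z.2))))
  rw [index_eq i hi, index_eq j hj]

theorem IsDominant.exists_isPivot_of_insert [Fintype I] [DecidableEq V]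
    (hu : ∀ i, Function.Injective (u i)) (hT : IsDominant u (insert x S)) (hxS : x ∉ S)
    (hcard : #S + 1 = Fintype.card I) : ∃ j, IsRedundant u S j ∧ IsPivot u S j x := by
  have hcardT : #(insert x S) = Fintype.card I := by rw [card_insert_of_notMem hxS, hcard]
  obtain ⟨j, hj⟩ := hT x
  have hexceeds : ExceedsExcept u S j x := by
    intro i hij
    by_contra! hi
    exact hij <| hT.eq_of_forall_le hu hcardT (mem_insert_self x S)
      (forall_mem_insert _ _ _ |>.2 ⟨le_rfl, hi⟩) hj
  refine ⟨j, fun z hz => ?_, hexceeds, fun y hy => ?_⟩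
  · obtain ⟨k, hk⟩ := hT z
    refine ⟨k, ?_, fun w hw => hk w (mem_insert_of_mem hw)⟩
    rintro rfl
    have hzx : z = x :=
      hu k ((hk x (mem_insert_self x S)).antisymm (hj z (mem_insert_of_mem hz)))
    exact hxS (hzx ▸ hz)
  · obtain ⟨i, hi⟩ := hT y
    obtain rfl : i = j := by
      by_contra hij
      obtain ⟨z, hz, hzy⟩ := hy i hij
      exact (hi z (mem_insert_of_mem hz)).not_gt hzy
    exact hi x (mem_insert_self x S)

open scoped Classical in
theorem IsDominant.card_filter_isRedundant [Fintype I] (hu : ∀ i, Function.Injective (u i))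
    (hS : IsDominant u S) (hne : S.Nonempty) (hcard : #S + 1 = Fintype.card I) :
    #{j | IsRedundant u S j} = 2 := by
  choose m hmS hm using fun i => S.exists_min_image (u i) hne
  have eq_m : ∀ {i z}, z ∈ S → (∀ w ∈ S, u i z ≤ u i w) → m i = z := fun {i z} hz hzmin =>
    hu i ((hm i z hz).antisymm (hzmin (m i) (hmS i)))
  have himage : univ.image m = S := by
    refine (image_subset_iff.2 fun i _ => hmS i).antisymm fun z hz => ?_
    obtain ⟨i, hi⟩ := hS z
    exact mem_image.2 ⟨i, mem_univ i, eq_m hz hi⟩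
  rw [← card_filter_image_erase_eq_two (s := univ) (f := m)
    (by rw [himage, hcard, card_univ]), himage]
  congr 1 with j
  simp only [mem_filter, mem_univ, true_and]
  constructor
  · refine fun hj => (himage ▸ image_subset_image (erase_subset j univ)).antisymm fun z hz => ?_
    obtain ⟨i, hij, hi⟩ := hj z hz
    exact mem_image.2 ⟨i, mem_erase.2 ⟨hij, mem_univ i⟩, eq_m hz hi⟩
  · intro hj z hz
    obtain ⟨i, hi, rfl⟩ := mem_image.1 (hj.symm ▸ hz)
    exact ⟨i, ne_of_mem_erase hi, hm i⟩

open scoped Classical in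
theorem IsDominant.card_filter_isDominant_insert [Fintype I] [Fintype V]
    (hu : ∀ i, Function.Injective (u i)) (hS : IsDominant u S) (hne : S.Nonempty)
    (hcard : #S + 1 = Fintype.card I) (hex : ∀ j, ∃ y, ExceedsExcept u S j y) :
    #{x | x ∉ S ∧ IsDominant u (insert x S)} = 2 := by
  choose X hX using fun j => exists_isPivot (hex j)
  have hXinj : Function.Injective X := fun i j hij =>
    (hX i).direction_unique hS (hij ▸ hX j)
  have himage : ({x | x ∉ S ∧ IsDominant u (insert x S)} : Finset V) =
      ({j | IsRedundant u S j} : Finset I).image X := by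
    ext x
    simp only [mem_filter, mem_univ, true_and, mem_image]
    constructor
    · rintro ⟨hxS, hx⟩
      obtain ⟨j, hj, hxj⟩ := hx.exists_isPivot_of_insert hu hxS hcard
      exact ⟨j, hj, hu j ((hxj.2 _ (hX j).1).antisymm ((hX j).2 x hxj.1))⟩
    · rintro ⟨j, hj, rfl⟩
      exact ⟨(hX j).notMem hj, (hX j).isDominant_insert hS⟩
  rw [himage, card_image_of_injective _ hXinj, hS.card_filter_isRedundant hu hne hcard]

/-- Slack points `s i`, playing the role of Scarf's slack vectors: `s i` is the worst point for
`u i`, and every other slack point is better for `u i` than all points that are not slack. -/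
structure IsSlackFamily (u : I → V → α) (s : I → V) : Prop where
  slack_lt : ∀ i v, v ≠ s i → u i (s i) < u i v
  lt_slack : ∀ i j v, i ≠ j → v ∉ Set.range s → u i v < u i (s j)

namespace IsSlackFamily

variable {s : I → V}

theorem slack_le (hs : IsSlackFamily u s) (i : I) (v : V) : u i (s i) ≤ u i v := by
  rcases eq_or_ne v (s i) with rfl | hv
  · exact le_rfl
  · exact (hs.slack_lt i v hv).le

theorem exists_exceedsExcept (hs : IsSlackFamily u s) {v : V} (hvS : v ∈ S)
    (hv : v ∉ Set.range s) (j : I) : ∃ y, ExceedsExcept u S j y :=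
  ⟨s j, fun i hij => ⟨v, hvS, hs.lt_slack i j v hij hv⟩⟩

theorem le_of_notMem_image_erase [Fintype I] [DecidableEq I] [DecidableEq V]
    (hs : IsSlackFamily u s) {i₀ : I} (hy : y ∉ (univ.erase i₀).image s)
    (hx : x ∈ (univ.erase i₀).image s) : u i₀ y ≤ u i₀ x := by
  obtain ⟨j, hj, rfl⟩ := mem_image.1 hx
  by_cases hrange : y ∈ Set.range s
  · obtain ⟨k, rfl⟩ := hrange
    obtain rfl : k = i₀ := by
      by_contra hk
      exact hy (mem_image_of_mem s (mem_erase.2 ⟨hk, mem_univ k⟩))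
    exact hs.slack_le k (s j)
  · exact (hs.lt_slack i₀ j y (ne_of_mem_erase hj).symm hrange).le

theorem isDominant_image_erase [Fintype I] [DecidableEq I] [DecidableEq V]
    (hs : IsSlackFamily u s) (i₀ : I) : IsDominant u ((univ.erase i₀).image s) := by
  intro y
  by_cases hy : y ∈ (univ.erase i₀).image s
  · obtain ⟨j, -, rfl⟩ := mem_image.1 hy
    exact ⟨j, fun v _ => hs.slack_le j v⟩
  · exact ⟨i₀, fun x hx => hs.le_of_notMem_image_erase hy hx⟩

open scoped Classical in
theorem card_filter_isDominant_insert_image_erase [Fintype I] [Fintype V]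
    (hs : IsSlackFamily u s) (hinj : Function.Injective s) (hu : ∀ i, Function.Injective (u i))
    (i₀ : I) :
    #{x | x ∉ (univ.erase i₀).image s ∧ IsDominant u (insert x ((univ.erase i₀).image s))} = 1 := by
  set E := (univ.erase i₀).image s with hE
  have hi₀ : s i₀ ∉ E := by simp [hE, hinj.eq_iff]
  obtain ⟨X, hXE, hX⟩ : ∃ X ∉ E, ∀ y ∉ E, u i₀ y ≤ u i₀ X :=
    Set.exists_max_image {y | y ∉ E} (u i₀) (Set.toFinite _) ⟨s i₀, hi₀⟩
  refine card_eq_one.2 ⟨X, ?_⟩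
  ext x
  simp only [mem_filter, mem_univ, true_and, mem_singleton]
  constructor
  · rintro ⟨hxE, hx⟩
    obtain ⟨i, hi⟩ := hx X
    obtain rfl : i = i₀ := by
      by_contra hii₀
      have hiE : s i ∈ E := mem_image_of_mem s (mem_erase.2 ⟨hii₀, mem_univ i⟩)
      have hXi : X = s i := hu i ((hi _ (mem_insert_of_mem hiE)).antisymm (hs.slack_le i X))
      exact hXE (hXi ▸ hiE)
    exact hu i ((hX x hxE).antisymm (hi x (mem_insert_self x E)))
  · rintro rfl
    refine ⟨hXE, fun y => ?_⟩
    by_cases hy : y ∈ E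
    · obtain ⟨j, -, rfl⟩ := mem_image.1 hy
      exact ⟨j, fun v _ => hs.slack_le j v⟩
    · exact ⟨i₀, forall_mem_insert _ _ _ |>.2
        ⟨hX y hy, fun z hz => hs.le_of_notMem_image_erase hy hz⟩⟩

end IsSlackFamily

/-- A room: a dominant set with as many points as there are coordinates, the abstract counterpart
of a cell of maximal dimension in a triangulation. -/
def IsRoom [Fintype I] (u : I → V → α) (R : Finset V) : Prop :=
  #R = Fintype.card I ∧ IsDominant u R

open scoped Classical in
theorem card_filter_isRoom_superset_eq [Fintype I] [Fintype V] {D : Finset V}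
    (hcard : #D + 1 = Fintype.card I) :
    #{R | IsRoom u R ∧ D ⊆ R} =
      #{x | x ∉ D ∧ IsDominant u (insert x D)} := by
  rw [← card_image_of_injOn (f := fun x => insert x D)
    ((insert_inj_on D).mono fun x hx => (mem_filter.1 hx).2.1)]
  congr 1 with R
  simp only [mem_filter, mem_univ, true_and, mem_image]
  constructor
  · rintro ⟨⟨hRcard, hR⟩, hDR⟩
    obtain ⟨x, hx, rfl⟩ := exists_eq_insert_iff.2 ⟨hDR, hcard.trans hRcard.symm⟩
    exact ⟨x, ⟨hx, hR⟩, rfl⟩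
  · rintro ⟨x, ⟨hx, hR⟩, rfl⟩
    exact ⟨⟨by rw [card_insert_of_notMem hx, hcard], hR⟩, subset_insert x D⟩

/-- A door: a dominant set one point smaller than a room, whose points carry exactly the colours
other than `i₀`. Walking through doors from room to room is Scarf's algorithm. -/
def IsDoor [Fintype I] [DecidableEq I] (u : I → V → α) (c : V → I) (i₀ : I) (D : Finset V) : Prop :=
  #D + 1 = Fintype.card I ∧ IsDominant u D ∧ D.image c = univ.erase i₀

theorem IsSlackFamily.isDoor_image_erase [Fintype I] [DecidableEq I] [DecidableEq V] {s : I → V}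
    {c : V → I} (hs : IsSlackFamily u s) (hc : Function.LeftInverse c s) (i₀ : I) :
    IsDoor u c i₀ ((univ.erase i₀).image s) := by
  refine ⟨?_, hs.isDominant_image_erase i₀, ?_⟩
  · rw [card_image_of_injective _ hc.injective, card_erase_add_one (mem_univ i₀), card_univ]
  · rw [image_image, hc.comp_eq_id, image_id]

open scoped Classical in
theorem even_card_filter_image_erase_eq [Fintype I] {c : V → I} (i₀ : I)
    (hcard : #S = Fintype.card I) (hS : S.image c ≠ univ) :
    Even #{x ∈ S | (S.erase x).image c = univ.erase i₀} := by
  by_cases himage : S.image c = univ.erase i₀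
  · rw [← himage, card_filter_image_erase_eq_two]
    · exact even_two
    · rw [himage, card_erase_add_one (mem_univ i₀), hcard, card_univ]
  · rw [filter_eq_empty_iff.2 fun x hx hxS => ?_]
    · simp
    have hinsert : S.image c = insert (c x) (univ.erase i₀) := by
      rw [← hxS, ← image_insert, insert_erase hx]
    rcases eq_or_ne (c x) i₀ with h | h
    · exact hS (by rw [hinsert, h, insert_erase (mem_univ i₀)])
    · exact himage (hinsert.trans (insert_eq_of_mem (mem_erase.2 ⟨h, mem_univ _⟩)))

open scoped Classical in
theorem even_card_filter_isDoor_subset [Fintype I] [Fintype V] {c : V → I} (i₀ : I)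
    (hS : IsRoom u S) (hcS : S.image c ≠ univ) :
    Even #{D | IsDoor u c i₀ D ∧ D ⊆ S} := by
  obtain ⟨hcard, hdom⟩ := hS
  convert even_card_filter_image_erase_eq i₀ hcard hcS using 1
  rw [← card_image_of_injOn ((erase_injOn S).mono fun x hx => (mem_filter.1 hx).1)]
  congr 1 with D
  simp only [mem_filter, mem_univ, true_and, mem_image]
  constructor
  · rintro ⟨⟨hDcard, -, hcD⟩, hDS⟩
    obtain ⟨x, hx, rfl⟩ := exists_eq_insert_iff.2 ⟨hDS, hDcard.trans hcard.symm⟩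
    exact ⟨x, ⟨mem_insert_self x D, by rwa [erase_insert hx]⟩, erase_insert hx⟩
  · rintro ⟨x, ⟨hx, hcx⟩, rfl⟩
    exact ⟨⟨by rw [card_erase_add_one hx, hcard], hdom.mono (erase_subset x S), hcx⟩,
      erase_subset x S⟩

open scoped Classical in
theorem IsDoor.card_filter_isRoom_superset_eq_two [Fintype I] [Fintype V] {s : I → V} {c : V → I}
    {i₀ : I} {D : Finset V} (hD : IsDoor u c i₀ D) (hu : ∀ i, Function.Injective (u i))
    (hs : IsSlackFamily u s) (hc : Function.LeftInverse c s) (hDs : D ≠ (univ.erase i₀).image s) :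
    #{R | IsRoom u R ∧ D ⊆ R} = 2 := by
  obtain ⟨hcard, hdom, hcD⟩ := hD
  obtain ⟨v, hvD, hv⟩ : ∃ v ∈ D, v ∉ Set.range s := by
    by_contra! hrange
    have hsc : ∀ v ∈ D, (s ∘ c) v = v := fun v hv => by
      obtain ⟨j, rfl⟩ := hrange v hv
      exact congrArg s (hc j)
    exact hDs (by rw [← hcD, image_image, image_congr (g := id) hsc, image_id])
  rw [card_filter_isRoom_superset_eq hcard]
  exact hdom.card_filter_isDominant_insert hu ⟨v, hvD⟩ hcard (hs.exists_exceedsExcept hvD hv)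

theorem IsSlackFamily.exists_colorful_of_injective [Finite I] [Nonempty I] [Finite V] {s : I → V}
    {c : V → I} (hs : IsSlackFamily u s) (hc : Function.LeftInverse c s)
    (hu : ∀ i, Function.Injective (u i)) :
    ∃ S : Finset V, IsDominant u S ∧ ∀ i, ∃ v ∈ S, c v = i := by
  classical
  cases nonempty_fintype I
  cases nonempty_fintype V
  let i₀ : I := Classical.arbitrary I
  let E : Finset V := (univ.erase i₀).image s
  let rooms : Finset (Finset V) := {R | IsRoom u R}
  let doors : Finset (Finset V) := {D | IsDoor u c i₀ D}
  -- The slack door `E` lies in one room and every other door in two, whereas a room that misses a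
  -- colour contains an even number of doors.
  have hcount : ∑ D ∈ doors, #{R ∈ rooms | D ⊆ R} = ∑ R ∈ rooms, #{D ∈ doors | D ⊆ R} := by
    simp only [card_filter]
    exact sum_comm
  have hE : IsDoor u c i₀ E := hs.isDoor_image_erase hc i₀
  have hodd : Odd (∑ D ∈ doors, #{R ∈ rooms | D ⊆ R}) := by
    rw [← add_sum_erase doors _ (mem_filter.2 ⟨mem_univ E, hE⟩)]
    refine Odd.add_even ?_ (even_sum _ fun D hD => ?_)
    · rw [filter_filter, card_filter_isRoom_superset_eq hE.1,
        hs.card_filter_isDominant_insert_image_erase hc.injective hu]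
      exact odd_one
    · obtain ⟨hDE, hD⟩ := mem_erase.1 hD
      rw [filter_filter, (mem_filter.1 hD).2.card_filter_isRoom_superset_eq_two hu hs hc hDE]
      exact even_two
  by_contra! hnone
  refine (Nat.not_even_iff_odd.2 hodd) (hcount ▸ even_sum _ fun R hR => ?_)
  have hroom : IsRoom u R := (mem_filter.1 hR).2
  rw [filter_filter]
  refine even_card_filter_isDoor_subset i₀ hroom fun hcR => ?_
  obtain ⟨i, hi⟩ := hnone R hroom.2
  obtain ⟨v, hv, hvi⟩ := mem_image.1 (hcR ▸ mem_univ i)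
  exact hi v hv hvi

theorem IsSlackFamily.exists_colorful [Finite I] [Nonempty I] [Finite V] {s : I → V}
    {c : V → I} (hs : IsSlackFamily u s) (hc : Function.LeftInverse c s) :
    ∃ S : Finset V, IsDominant u S ∧ ∀ i, ∃ v ∈ S, c v = i := by
  obtain ⟨n, ⟨e⟩⟩ := Finite.exists_equiv_fin V
  -- Breaking ties by an enumeration of `V` makes the preferences injective.
  let w : I → V → α ×ₗ Fin n := fun i v => toLex (u i v, e v)
  have hw : ∀ i, Function.Injective (w i) := fun i v v' h =>
    e.injective (congrArg (fun p => (ofLex p).2) h)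
  have hlt : ∀ {i v v'}, u i v < u i v' → w i v < w i v' := fun h =>
    Prod.Lex.toLex_lt_toLex.2 (Or.inl h)
  have hsw : IsSlackFamily w s :=
    ⟨fun i v hv => hlt (hs.slack_lt i v hv), fun i j v hij hv => hlt (hs.lt_slack i j v hij hv)⟩
  obtain ⟨S, hS, hcS⟩ := hsw.exists_colorful_of_injective hc hw
  exact ⟨S, fun y => (hS y).imp fun i hi x hx => Prod.Lex.monotone_fst _ _ (hi x hx), hcS⟩

end Scarf

section DualKKM

open Finset

variable {I : Type*}

theorem exists_colorful_of_finite {X β : Type*} [Finite I] [Nonempty I] [Finite X] [LinearOrder β]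
    (f : I → X → β) (c : X → I) :
    ∃ (σ : Finset X) (C : Finset I), (∀ i ∈ C, ∃ x ∈ σ, c x = i) ∧
      ∀ t, ∃ i ∈ C, ∀ x ∈ σ, f i t ≤ f i x := by
  classical
  cases nonempty_fintype I
  let u : I → X ⊕ I → WithBot (WithTop β) := fun i =>
    Sum.elim (fun x => ((f i x : WithTop β) : WithBot (WithTop β))) fun j => if j = i then ⊥ else ⊤
  have hslack : IsSlackFamily u Sum.inr := by
    refine ⟨?_, ?_⟩
    · rintro i (x | j) hv
      · simp [u]
      · have hji : j ≠ i := fun h => hv (congrArg _ h)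
        simp [u, hji]
    · rintro i j (x | k) hij hv
      · simp only [u, Sum.elim_inl, Sum.elim_inr, if_neg hij.symm]
        exact WithBot.coe_lt_coe.2 (WithTop.coe_lt_top _)
      · exact (hv ⟨k, rfl⟩).elim
  obtain ⟨S, hS, hcS⟩ := hslack.exists_colorful (c := Sum.elim c id) fun _ => rfl
  refine ⟨S.toLeft, (S.toRight)ᶜ, fun i hi => ?_, fun t => ?_⟩
  · rw [mem_compl, mem_toRight] at hi
    obtain ⟨x | j, hv, rfl⟩ := hcS i
    · exact ⟨x, mem_toLeft.2 hv, rfl⟩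
    · exact (hi hv).elim
  · obtain ⟨i, hi⟩ := hS (Sum.inl t)
    refine ⟨i, ?_, fun x hx => ?_⟩
    · rw [mem_compl, mem_toRight]
      intro hiS
      simpa [u] using hi _ hiS
    · simpa [u] using hi _ (mem_toLeft.1 hx)

theorem exists_colorful_lower_corner {X β : Type*} [Finite I] [Nonempty I] [Finite X] [Nonempty X]
    [LinearOrder β] [Zero β] {f : I → X → β} (hf : ∀ i x, 0 ≤ f i x) (c : X → I) :
    ∃ (σ : Finset X) (m : I → β), σ.Nonempty ∧ (∀ i, 0 ≤ m i) ∧ (∀ x ∈ σ, ∀ i, m i ≤ f i x) ∧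
      (∀ i, 0 < m i → ∃ x ∈ σ, c x = i) ∧ ∀ t, ∃ i, f i t ≤ m i := by
  classical
  obtain ⟨σ, C, hcC, hσ⟩ := exists_colorful_of_finite f c
  have hne : σ.Nonempty := by
    obtain ⟨i, hi, -⟩ := hσ (Classical.arbitrary X)
    obtain ⟨x, hx, -⟩ := hcC i hi
    exact ⟨x, hx⟩
  let m : I → β := fun i => if i ∈ C then σ.inf' hne (f i) else 0
  have hm_mem : ∀ {i}, i ∈ C → m i = σ.inf' hne (f i) := fun hi => if_pos hi
  have hm_notMem : ∀ {i}, i ∉ C → m i = 0 := fun hi => if_neg hi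
  refine ⟨σ, m, hne, fun i => ?_, fun x hx i => ?_, fun i hi => hcC i ?_, fun t => ?_⟩
  · by_cases hi : i ∈ C
    · exact hm_mem hi ▸ le_inf' _ _ fun x _ => hf i x
    · exact (hm_notMem hi).ge
  · by_cases hi : i ∈ C
    · exact hm_mem hi ▸ inf'_le _ hx
    · exact hm_notMem hi ▸ hf i x
  · by_contra hiC
    exact hi.ne' (hm_notMem hiC)
  · obtain ⟨i, hi, hti⟩ := hσ t
    exact ⟨i, hm_mem hi ▸ le_inf' _ _ hti⟩

variable [Fintype I]

theorem le_add_of_one_sub_le_sum {m x : I → ℝ} {δ : ℝ} (hle : ∀ i, m i ≤ x i)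
    (hx : ∑ i, x i = 1) (hm : 1 - δ ≤ ∑ i, m i) (i : I) : x i ≤ m i + δ := by
  have h := single_le_sum (f := fun j => x j - m j) (fun j _ => sub_nonneg.2 (hle j)) (mem_univ i)
  rw [sum_sub_distrib, hx] at h
  linarith

theorem one_sub_le_sum_of_dense [Nonempty I] {T : Set (stdSimplex ℝ I)} {ε : ℝ} {m : I → ℝ}
    (hT : ∀ y, ∃ t ∈ T, dist y t ≤ ε) (hm : ∀ i, 0 ≤ m i) (hmT : ∀ t ∈ T, ∃ i, t i ≤ m i) :
    1 - Fintype.card I * ε ≤ ∑ i, m i := by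
  by_contra! hlt
  have hcard : (0 : ℝ) < Fintype.card I := Nat.cast_pos.2 Fintype.card_pos
  set r : ℝ := (1 - ∑ i, m i) / Fintype.card I with hr
  have hεr : ε < r := by
    rw [hr, lt_div_iff₀ hcard]
    linarith
  -- Spreading the missing mass evenly gives a point of the simplex so far above `m` in every
  -- coordinate that no point of `T` can be close to it.
  obtain ⟨t₀, -, ht₀⟩ := hT (Classical.arbitrary _)
  have hr0 : 0 ≤ r := (dist_nonneg.trans ht₀).trans hεr.le
  have hy : (fun i => m i + r) ∈ stdSimplex ℝ I := by
    refine ⟨fun i => add_nonneg (hm i) hr0, ?_⟩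
    rw [sum_add_distrib, sum_const, card_univ, nsmul_eq_mul, hr, mul_div_cancel₀ _ hcard.ne']
    ring
  obtain ⟨t, ht, hdist⟩ := hT ⟨_, hy⟩
  obtain ⟨i, hi⟩ := hmT t ht
  have hcoord : |m i + r - t i| ≤ ε := (dist_le_pi_dist (fun i => m i + r) t i).trans hdist
  linarith [(abs_le.1 hcoord).2]

theorem exists_colorful_dist_le [Nonempty I] (c : stdSimplex ℝ I → I) {δ : ℝ} (hδ : 0 < δ) :
    ∃ σ : Set (stdSimplex ℝ I), σ.Nonempty ∧ (∀ x ∈ σ, ∀ y ∈ σ, dist x y ≤ δ) ∧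
      ∀ x ∈ σ, ∀ i, δ < x i → ∃ y ∈ σ, c y = i := by
  have hcard : (0 : ℝ) < Fintype.card I := Nat.cast_pos.2 Fintype.card_pos
  obtain ⟨T, -, hTfin, hTdense⟩ := Metric.finite_approx_of_totallyBounded
    (isCompact_univ (X := stdSimplex ℝ I)).totallyBounded _ (div_pos hδ hcard)
  have hT : ∀ y, ∃ t ∈ T, dist y t ≤ δ / Fintype.card I := fun y => by
    obtain ⟨t, ht, hyt⟩ := Set.mem_iUnion₂.1 (hTdense (Set.mem_univ y))
    exact ⟨t, ht, (Metric.mem_ball.1 hyt).le⟩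
  have : Finite T := hTfin.to_subtype
  have : Nonempty T := (hT (Classical.arbitrary _)).elim fun t ht => ⟨⟨t, ht.1⟩⟩
  obtain ⟨σ, m, hne, hm, hmσ, hmc, hmT⟩ := exists_colorful_lower_corner
    (f := fun i (t : T) => (t : stdSimplex ℝ I) i) (fun i t => stdSimplex.zero_le t.1 i)
    fun t => c t
  have hsum : 1 - δ ≤ ∑ i, m i := by
    have h := one_sub_le_sum_of_dense hT hm fun t ht => hmT ⟨t, ht⟩
    rwa [mul_div_cancel₀ _ hcard.ne'] at h
  have hσm : ∀ t ∈ σ, ∀ i, (t : stdSimplex ℝ I) i ≤ m i + δ := fun t ht =>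
    le_add_of_one_sub_le_sum (hmσ t ht) (stdSimplex.sum_eq_one t.1) hsum
  refine ⟨Subtype.val '' (σ : Set T), hne.to_set.image _, ?_, ?_⟩
  · rintro _ ⟨x, hx, rfl⟩ _ ⟨y, hy, rfl⟩
    refine (dist_pi_le_iff hδ.le).2 fun i => abs_sub_le_iff.2 ⟨?_, ?_⟩
    · exact sub_le_iff_le_add'.2 ((hσm x hx i).trans (add_le_add_left (hmσ y hy i) δ))
    · exact sub_le_iff_le_add'.2 ((hσm y hy i).trans (add_le_add_left (hmσ x hx i) δ))
  · rintro _ ⟨x, hx, rfl⟩ i hi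
    obtain ⟨y, hy, hyi⟩ := hmc i (pos_of_lt_add_left (hi.trans_le (hσm x hx i)))
    exact ⟨y, ⟨y, hy, rfl⟩, hyi⟩

theorem exists_forall_mem_of_pos_of_isClosed_cover [Nonempty I] {A : I → Set (stdSimplex ℝ I)}
    (hclosed : ∀ i, IsClosed (A i)) (hA : ∀ x, ∃ i, x ∈ A i) :
    ∃ x : stdSimplex ℝ I, ∀ i, 0 < x i → x ∈ A i := by
  choose c hc using hA
  let K : Set.Ioi (0 : ℝ) → Set (stdSimplex ℝ I) := fun δ =>
    {x | ∀ i, x i ≤ δ ∨ x ∈ Metric.cthickening δ (A i)}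
  have hK_nonempty : ∀ δ, (K δ).Nonempty := fun ⟨δ, hδ⟩ => by
    obtain ⟨σ, ⟨x, hx⟩, hdist, hσ⟩ := exists_colorful_dist_le c hδ
    refine ⟨x, fun i => or_iff_not_imp_left.2 fun hi => ?_⟩
    obtain ⟨y, hy, rfl⟩ := hσ x hx i (not_le.1 hi)
    exact Metric.mem_cthickening_of_dist_le _ _ _ _ (hc y) (hdist x hx y hy)
  have hK_mono : Monotone K := fun δ ε hδε x hx i =>
    (hx i).imp (fun h => h.trans hδε) fun h => Metric.cthickening_mono hδε _ h
  have hK_closed : ∀ δ, IsClosed (K δ) := fun δ => by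
    simp only [K, Set.ofPred_forall, Set.ofPred_or]
    exact isClosed_iInter fun i =>
      (isClosed_le ((continuous_apply i).comp continuous_subtype_val) continuous_const).union
        Metric.isClosed_cthickening
  obtain ⟨x, hx⟩ := IsCompact.nonempty_iInter_of_directed_nonempty_isCompact_isClosed K
    hK_mono.directed_ge hK_nonempty (fun δ => (hK_closed δ).isCompact) hK_closed
  refine ⟨x, fun i hi => ?_⟩
  rw [← (hclosed i).closure_eq, Metric.closure_eq_iInter_cthickening' _ (Set.Ioo 0 (x i))]
  · refine Set.mem_iInter₂.2 fun δ hδ => ?_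
    exact (Set.mem_iInter.1 hx ⟨δ, hδ.1⟩ i).resolve_left hδ.2.not_ge
  · intro δ hδ
    obtain ⟨r, hr0, hr⟩ := exists_between (lt_min hi hδ)
    exact ⟨r, ⟨hr0, hr.trans_le (min_le_left _ _)⟩, hr0, hr.le.trans (min_le_right _ _)⟩

theorem kkm_stdSimplex [Nonempty I] {A : I → Set (stdSimplex ℝ I)} (hclosed : ∀ i, IsClosed (A i))
    (hA : ∀ x : stdSimplex ℝ I, ∃ i, 0 < x i ∧ x ∈ A i) : (⋂ i, A i).Nonempty := by
  let B : I → Set (stdSimplex ℝ I) := fun i =>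
    {x | ∀ j, Metric.infEDist x (A j) ≤ Metric.infEDist x (A i)}
  have hB : ∀ x, ∃ i, x ∈ B i := fun x => Finite.exists_max fun i => Metric.infEDist x (A i)
  have hBclosed : ∀ i, IsClosed (B i) := fun i => by
    simp only [B, Set.ofPred_forall]
    exact isClosed_iInter fun j => isClosed_le Metric.continuous_infEDist Metric.continuous_infEDist
  obtain ⟨x, hx⟩ := exists_forall_mem_of_pos_of_isClosed_cover hBclosed hB
  obtain ⟨i, hi, hxi⟩ := hA x
  refine ⟨x, Set.mem_iInter.2 fun j => ?_⟩
  rw [Metric.mem_iff_infEDist_zero_of_closed (hclosed j), ← nonpos_iff_eq_zero,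
    ← Metric.infEDist_zero_of_mem hxi]
  exact hx i hi j

end DualKKM

section KKMMap

open Finset

variable {E : Type*} [AddCommGroup E] [Module ℝ E]

theorem sum_smul_mem_convexHull_image_pos {I : Type*} [Fintype I] (l : stdSimplex ℝ I)
    (p : I → E) : ∑ i, l i • p i ∈ convexHull ℝ (p '' {i | 0 < l i}) := by
  classical
  have hfilter : ∑ i with 0 < l i, l i • p i = ∑ i, l i • p i := sum_filter_of_ne fun i _ hi =>
    (stdSimplex.zero_le l i).lt_of_ne' (left_ne_zero_of_smul hi)
  have hone : ∑ i with 0 < l i, l i = 1 := by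
    rw [sum_filter_of_ne fun i _ hi => (stdSimplex.zero_le l i).lt_of_ne' hi,
      stdSimplex.sum_eq_one l]
  rw [← hfilter]
  exact (convex_convexHull ℝ _).sum_mem (fun i _ => stdSimplex.zero_le l i) hone fun i hi =>
    subset_convexHull ℝ _ ⟨i, (mem_filter.1 hi).2, rfl⟩

/-- A KKM map on `R` (after Knaster, Kuratowski, Mazurkiewicz and Ky Fan): the convex hull of any
set of points of `R` is covered, within `R`, by the sets which `G` attaches to these points. -/
def IsKKMMap {R : Set E} (G : R → Set R) : Prop :=
  ∀ (t : Set R) (x : R), (x : E) ∈ convexHull ℝ ((↑) '' t) → ∃ w ∈ t, x ∈ G w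

variable [TopologicalSpace E] [ContinuousAdd E] [ContinuousSMul ℝ E] {R : Set E} {G : R → Set R}

theorem IsKKMMap.nonempty_biInter (hG : IsKKMMap G) (hR : Convex ℝ R)
    (hclosed : ∀ w, IsClosed (G w)) (t : Finset R) (ht : t.Nonempty) : (⋂ w ∈ t, G w).Nonempty := by
  have : Nonempty t := ht.to_subtype
  let F : stdSimplex ℝ t → R := fun l => ⟨∑ i, l i • (i : E),
    hR.sum_mem (fun i _ => stdSimplex.zero_le l i) (stdSimplex.sum_eq_one l) fun i _ => i.1.2⟩
  have hF : Continuous F := Continuous.subtype_mk (continuous_finsetSum _ fun i _ =>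
    ((continuous_apply i).comp continuous_subtype_val).smul continuous_const) _
  obtain ⟨l, hl⟩ := kkm_stdSimplex (A := fun i : t => F ⁻¹' G i)
    (fun i => (hclosed i).preimage hF) fun l => by
      obtain ⟨_, ⟨i, hi, rfl⟩, hFl⟩ := hG ((↑) '' {i : t | 0 < l i}) (F l) <| by
        rw [Set.image_image]
        exact sum_smul_mem_convexHull_image_pos l _
      exact ⟨i, hi, hFl⟩
  exact ⟨F l, Set.mem_iInter₂.2 fun w hw => Set.mem_iInter.1 hl ⟨w, hw⟩⟩

theorem IsKKMMap.nonempty_iInter (hG : IsKKMMap G) (hR : Convex ℝ R) (hne : R.Nonempty)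
    (hcompact : IsCompact R) (hclosed : ∀ w, IsClosed (G w)) : (⋂ w, G w).Nonempty := by
  have : CompactSpace R := isCompact_iff_compactSpace.1 hcompact
  refine CompactSpace.iInter_nonempty hclosed fun t => ?_
  rcases t.eq_empty_or_nonempty with rfl | ht
  · have : Nonempty R := hne.to_subtype
    simp
  · exact hG.nonempty_biInter hR hclosed t ht

end KKMMap

section BestReply

theorem isOpen_setOf_lt_of_semicontinuous {X β : Type*} [TopologicalSpace X] [LinearOrder β]
    {f g : X → β} (hf : UpperSemicontinuous f) (hg : LowerSemicontinuous g) :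
    IsOpen {x | f x < g x} := by
  refine isOpen_iff_mem_nhds.2 fun x hx => ?_
  by_cases hr : ∃ r, f x < r ∧ r < g x
  · obtain ⟨r, hfr, hrg⟩ := hr
    filter_upwards [hf x r hfr, hg x r hrg] with z hfz hgz using hfz.trans hgz
  · push Not at hr
    filter_upwards [hf x _ hx, hg x _ hx] with z hfz hgz
    by_contra! hle
    exact (hfz.trans_le (hr _ (hgz.trans_le hle))).false

theorem isKKMMap_setOf_le_of_quasiconvexOn {E β : Type*} [AddCommGroup E] [Module ℝ E]
    [LinearOrder β] {R : Set E} {ρ : E → E → β} (hρ : ∀ x ∈ R, QuasiconvexOn ℝ R (ρ x)) :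
    IsKKMMap fun w : R => {x : R | ρ x x ≤ ρ x w} := by
  intro t x hx
  by_contra! hlt
  have hsub : (↑) '' t ⊆ {w ∈ R | ρ x w < ρ x x} := by
    rintro _ ⟨w, hw, rfl⟩
    exact ⟨w.2, not_le.1 (hlt w hw)⟩
  exact (convexHull_min hsub ((hρ x x.2).convex_lt (ρ x x)) hx).2.false

theorem best_reply_fixed_point_general {E β : Type*} [AddCommGroup E] [Module ℝ E]
    [TopologicalSpace E] [ContinuousAdd E] [ContinuousSMul ℝ E] [LinearOrder β] {R : Set E}
    (hne : R.Nonempty) (hconv : Convex ℝ R) (hcomp : IsCompact R) {ρ : E → E → β}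
    (hcont : ∀ y ∈ R, UpperSemicontinuousOn (fun x => ρ x y) R)
    (hlsc : LowerSemicontinuousOn (fun x => ρ x x) R)
    (hρ : ∀ x ∈ R, QuasiconvexOn ℝ R (ρ x)) :
    ∃ xt ∈ R, ∀ w ∈ R, ρ xt xt ≤ ρ xt w := by
  have hclosed : ∀ w : R, IsClosed {x : R | ρ x x ≤ ρ x w} := fun w => by
    simp only [← not_lt]
    exact (isOpen_setOf_lt_of_semicontinuous (upperSemicontinuousOn_iff_restrict.2 (hcont w w.2))
      (lowerSemicontinuous_restrict_iff.2 hlsc)).isClosed_compl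
  obtain ⟨x, hx⟩ :=
    (isKKMMap_setOf_le_of_quasiconvexOn hρ).nonempty_iInter hconv hne hcomp hclosed
  exact ⟨x, x.2, fun w hw => Set.mem_iInter.1 hx ⟨w, hw⟩⟩

end BestReply

/-- Kakutani-type fixed point result: the best-reply map
`ζ(x) = argmin_{z ∈ R} ρ(x, z)` has a fixed point. -/
theorem best_reply_fixed_point (n : ℕ) (R : Set (EuclideanSpace ℝ (Fin n)))
    (hne : R.Nonempty) (hconv : Convex ℝ R) (hcomp : IsCompact R)
    (ρ : EuclideanSpace ℝ (Fin n) → EuclideanSpace ℝ (Fin n) → ℝ)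
    (hcont : ∀ y ∈ R, ContinuousOn (fun x => ρ x y) R)
    (hlsc : LowerSemicontinuousOn
      (fun p : EuclideanSpace ℝ (Fin n) × EuclideanSpace ℝ (Fin n) => ρ p.1 p.2)
      (R ×ˢ R))
    (hρconv : ∀ x ∈ R, ConvexOn ℝ R (ρ x)) :
    ∃ xt ∈ R, ∀ w ∈ R, ρ xt xt ≤ ρ xt w :=
  best_reply_fixed_point_general hne hconv hcomp (fun y hy => (hcont y hy).upperSemicontinuousOn)
    (hlsc.comp (g := fun x => (x, x)) (by fun_prop) fun x hx => ⟨hx, hx⟩)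
    fun x hx => (hρconv x hx).quasiconvexOn
end

section
/- Under the assumptions of the nonconvex sum-aggregative game Γ (action sets X_i ⊆ R^d compact with diameter ≤ Δ, costs f_i(x) = θ_i(x_i, (1/n) Σ_j A_j x_j) with ||A_j||_2 ≤ M, θ_i lower semicontinuous in x_i and (H, γ)-Hölder in the aggregate), Γ admits an additively ε-pure Nash equilibrium with ε = 2H((√q + 1) M Δ / n)^γ, where q is the dimension of the aggregate space. -/
/-!
Fix an aggregate `y` and let every player respond to it up to an error `η`. The approximate best
responses stay valid when `y` moves a little, so the convex hull of the sum of their contributions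
to the aggregate admits a `C¹` selection in `y`, and Brouwer's theorem gives a `y` lying in the
convex hull belonging to `y` itself: an approximate equilibrium of the convexified game. By the
Shapley–Folkman–Starr theorem, choosing a genuine strategy for every player moves the aggregate by
at most `√q * r`, where `r = M * Δ / n` bounds the influence of one player. A unilateral deviation
then sees an aggregate within `(√q + 1) * r` of `y`, so Hölder continuity of the costs bounds the
regret by `H * (√q * r) ^ γ + H * ((√q + 1) * r) ^ γ + η`, and `η` is chosen to make this equal to
`2 * H * ((√q + 1) * r) ^ γ`.

Brouwer's theorem is reduced to the nonexistence of a `C¹` retraction of the ball onto the sphere,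
which follows from the volume argument of Milnor and Rogers.
-/

open Bornology Filter Finset MeasureTheory Metric Module Topology
open scoped Pointwise

section ShapleyFolkman

section Field

universe u v w

variable {𝕜 : Type u} [Field 𝕜]

theorem linearIndependent_of_affineIndependent_of_map_eq_one {V κ : Type*} [AddCommGroup V]
    [Module 𝕜 V] {p : κ → V} (hp : AffineIndependent 𝕜 p) (φ : V →ₗ[𝕜] 𝕜) (hφ : ∀ k, φ (p k) = 1) :
    LinearIndependent 𝕜 p := by
  rw [linearIndependent_iff']
  intro s g hg
  have hg_sum : ∑ k ∈ s, g k = 0 := by simpa [hφ] using congrArg φ hg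
  exact affineIndependent_iff.1 hp s g hg_sum hg

theorem card_one_lt_fiber_le {κ ι : Type*} [Fintype κ] [Fintype ι] [DecidableEq ι] {c : κ → ι}
    (hc : c.Surjective) {m : ℕ} (hm : Fintype.card κ ≤ m + Fintype.card ι) :
    #{i | 1 < #{k | c k = i}} ≤ m := by
  have hfiber (i : ι) : 0 < #{k | c k = i} := by
    obtain ⟨k, hk⟩ := hc i
    exact card_pos.2 ⟨k, by simpa using hk⟩
  have hle : ∑ i, ((if 1 < #{k | c k = i} then 1 else 0) + 1) ≤ ∑ i, #{k | c k = i} :=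
    sum_le_sum fun i _ ↦ by have := hfiber i; split_ifs <;> lia
  have hcard : Fintype.card κ = ∑ i, #{k | c k = i} :=
    card_eq_sum_card_fiberwise fun _ _ ↦ mem_coe.2 (mem_univ _)
  rw [sum_add_distrib, ← card_filter, ← hcard, sum_const, card_univ, smul_eq_mul, mul_one] at hle
  lia

variable [LinearOrder 𝕜] [IsStrictOrderedRing 𝕜] {E : Type v} {ι : Type w} [AddCommGroup E]
  [Module 𝕜 E] [FiniteDimensional 𝕜 E] [Fintype ι] {S : ι → Set E}

/-- Carathéodory's theorem in `E × (ι → 𝕜)`, applied to the average of the points `(z i, eᵢ)`: the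
second component records which set each extreme point was taken from. -/
theorem exists_fiberwise_convexCombination [DecidableEq ι] {z : ι → E}
    (hz : ∀ i, z i ∈ convexHull 𝕜 (S i)) :
    ∃ (κ : Type max u v w) (_ : Fintype κ) (c : κ → ι) (p : κ → E) (w : κ → 𝕜),
      Fintype.card κ ≤ finrank 𝕜 E + Fintype.card ι ∧ (∀ k, p k ∈ S (c k)) ∧ (∀ k, 0 < w k) ∧
        (∀ i, ∑ k with c k = i, w k = 1) ∧ ∑ k, w k • p k = ∑ i, z i := by
  rcases isEmpty_or_nonempty ι with _ | _
  · exact ⟨PEmpty, inferInstance, PEmpty.elim, PEmpty.elim, PEmpty.elim, by simp⟩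
  set n : 𝕜 := (Fintype.card ι : 𝕜)
  have hn : 0 < n := Nat.cast_pos.2 Fintype.card_pos
  let T : Set (E × (ι → 𝕜)) := ⋃ i, S i ×ˢ {Pi.single i 1}
  have hzT (i : ι) : (z i, Pi.single i 1) ∈ convexHull 𝕜 T := by
    refine convexHull_mono (Set.subset_iUnion _ i) ?_
    rw [convexHull_prod, convexHull_singleton]
    exact ⟨hz i, rfl⟩
  have hmean : ∑ i, n⁻¹ • (z i, (Pi.single i 1 : ι → 𝕜)) ∈ convexHull 𝕜 T :=
    (convex_convexHull 𝕜 T).sum_mem (fun _ _ ↦ by positivity)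
      (by simp [n, hn.ne']) fun i _ ↦ hzT i
  obtain ⟨κ, _, p, w, hpT, hp, hw, -, hwp⟩ := eq_pos_convex_span_of_mem_convexHull hmean
  have hmem (k : κ) : ∃ i, (p k).1 ∈ S i ∧ (p k).2 = Pi.single i 1 := by
    simpa [T] using hpT ⟨k, rfl⟩
  choose c hc_mem hc_single using hmem
  have hlin : LinearIndependent 𝕜 p :=
    linearIndependent_of_affineIndependent_of_map_eq_one hp
      (Fintype.linearCombination 𝕜 (fun _ : ι ↦ (1 : 𝕜)) ∘ₗ LinearMap.snd 𝕜 E (ι → 𝕜))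
      fun k ↦ by simp [hc_single, Fintype.linearCombination_apply]
  have hfst : ∑ k, w k • (p k).1 = n⁻¹ • ∑ i, z i := by
    simpa [Prod.fst_sum, Finset.smul_sum] using congrArg Prod.fst hwp
  have hsnd (i : ι) : ∑ k with c k = i, w k = n⁻¹ := by
    simpa [Prod.snd_sum, hc_single, Pi.single_apply, Finset.sum_filter, eq_comm] using
      congrFun (congrArg Prod.snd hwp) i
  refine ⟨κ, inferInstance, c, fun k ↦ (p k).1, fun k ↦ n * w k, ?_, hc_mem,
    fun k ↦ mul_pos hn (hw k), fun i ↦ ?_, ?_⟩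
  · simpa using hlin.fintype_card_le_finrank
  · rw [← mul_sum, hsnd, mul_inv_cancel₀ hn.ne']
  · simp_rw [mul_smul, ← Finset.smul_sum, hfst, smul_inv_smul₀ hn.ne']

theorem shapley_folkman {x : E} (hx : x ∈ convexHull 𝕜 (∑ i, S i)) :
    ∃ z : ι → E, ∑ i, z i = x ∧ (∀ i, z i ∈ convexHull 𝕜 (S i)) ∧
      ∃ b : Finset ι, #b ≤ finrank 𝕜 E ∧ ∀ i ∉ b, z i ∈ S i := by
  classical
  rw [convexHull_sum, Set.mem_fintype_sum] at hx
  obtain ⟨z₀, hz₀, rfl⟩ := hx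
  obtain ⟨κ, _, c, p, w, hcard, hp, hw, hw_one, hwp⟩ := exists_fiberwise_convexCombination hz₀
  have hc : c.Surjective := fun i ↦ by
    obtain ⟨k, hk, -⟩ := exists_ne_zero_of_sum_ne_zero ((hw_one i).trans_ne one_ne_zero)
    exact ⟨k, by simpa using hk⟩
  have hfiber (i : ι) : ∀ k ∈ ({k | c k = i} : Finset κ), p k ∈ S i := fun k hk ↦
    (mem_filter.1 hk).2 ▸ hp k
  refine ⟨fun i ↦ ∑ k with c k = i, w k • p k, (sum_fiberwise _ _ _).trans hwp, fun i ↦ ?_,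
    ({i | 1 < #{k | c k = i}} : Finset ι), card_one_lt_fiber_le hc hcard, fun i hi ↦ ?_⟩
  · exact (convex_convexHull 𝕜 (S i)).sum_mem (fun k _ ↦ (hw k).le) (hw_one i)
      fun k hk ↦ subset_convexHull 𝕜 _ (hfiber i k hk)
  · have hcard_one : #{k | c k = i} = 1 := by
      obtain ⟨k, hk⟩ := hc i
      exact le_antisymm (by simpa using hi) (card_pos.2 ⟨k, by simpa using hk⟩)
    obtain ⟨k, hk⟩ := card_eq_one.1 hcard_one
    have hwk : w k = 1 := by simpa [hk] using hw_one i
    simpa [hk, hwk] using hfiber i k (by simp [hk])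

end Field

variable {E ι : Type*} [NormedAddCommGroup E] [InnerProductSpace ℝ E]

theorem exists_mem_inner_sub_nonpos_of_mem_convexHull {s : Set E} {z : E}
    (hz : z ∈ convexHull ℝ s) (e : E) : ∃ a ∈ s, inner ℝ e (a - z) ≤ 0 := by
  have hconcave : ConcaveOn ℝ Set.univ (innerSL ℝ e) :=
    (innerSL ℝ e).toLinearMap.concaveOn convex_univ
  simpa [inner_sub_right] using hconcave.exists_le_of_mem_convexHull (Set.subset_univ s) hz

/-- Greedy rounding: each new point is chosen so that its error makes an obtuse angle with the error
accumulated so far, hence the squared errors add up. -/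
theorem exists_mem_norm_sum_sub_sq_le {S : ι → Set E} {z : ι → E} {D : ι → ℝ}
    (b : Finset ι) (hS : ∀ i ∈ b, ∀ x ∈ S i, ∀ y ∈ S i, dist x y ≤ D i)
    (hz : ∀ i ∈ b, z i ∈ convexHull ℝ (S i)) :
    ∃ s : ι → E, (∀ i ∈ b, s i ∈ S i) ∧ ‖∑ i ∈ b, (s i - z i)‖ ^ 2 ≤ ∑ i ∈ b, D i ^ 2 := by
  classical
  induction b using Finset.induction_on with
  | empty => exact ⟨0, by simp⟩
  | insert j b hj ih =>
    obtain ⟨s, hs, herr⟩ := ih (fun i hi ↦ hS i (mem_insert_of_mem hi))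
      fun i hi ↦ hz i (mem_insert_of_mem hi)
    have hzj := hz j (mem_insert_self j b)
    obtain ⟨a, ha, hinner⟩ :=
      exists_mem_inner_sub_nonpos_of_mem_convexHull hzj (∑ i ∈ b, (s i - z i))
    obtain ⟨a', ha', haa'⟩ := convexHull_exists_dist_ge hzj a
    have hdist : ‖a - z j‖ ≤ D j := by
      rw [← dist_eq_norm, dist_comm]
      exact haa'.trans (hS j (mem_insert_self j b) a' ha' a ha)
    have hne {i : ι} (hi : i ∈ b) : i ≠ j := ne_of_mem_of_not_mem hi hj
    refine ⟨Function.update s j a, (forall_mem_insert ..).2 ⟨by simpa using ha, fun i hi ↦ ?_⟩, ?_⟩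
    · simpa [hne hi] using hs i hi
    · have hold : ∑ i ∈ b, (Function.update s j a i - z i) = ∑ i ∈ b, (s i - z i) :=
        sum_congr rfl fun i hi ↦ by simp [hne hi]
      rw [sum_insert hj, sum_insert hj, hold, Function.update_self, add_comm, norm_add_sq_real]
      linarith [pow_le_pow_left₀ (norm_nonneg _) hdist 2]

theorem shapley_folkman_starr [FiniteDimensional ℝ E] [Fintype ι] {S : ι → Set E} {D : ℝ}
    (hD : 0 ≤ D) (hS : ∀ i, ∀ x ∈ S i, ∀ y ∈ S i, dist x y ≤ D) {x : E}
    (hx : x ∈ convexHull ℝ (∑ i, S i)) :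
    ∃ s : ι → E, (∀ i, s i ∈ S i) ∧ ‖∑ i, s i - x‖ ≤ √(finrank ℝ E) * D := by
  classical
  obtain ⟨z, rfl, hz, b, hb, hzb⟩ := shapley_folkman hx
  obtain ⟨s, hs, herr⟩ := exists_mem_norm_sum_sub_sq_le b (fun i _ ↦ hS i) fun i _ ↦ hz i
  refine ⟨b.piecewise s z, fun i ↦ ?_, ?_⟩
  · by_cases hi : i ∈ b
    · simpa [hi] using hs i hi
    · simpa [hi] using hzb i hi
  · have hsum : ∑ i, b.piecewise s z i - ∑ i, z i = ∑ i ∈ b, (s i - z i) := by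
      rw [sum_piecewise, Finset.univ_inter, ← compl_eq_univ_sdiff, ← sum_add_sum_compl b z,
        add_sub_add_right_eq_sub, sum_sub_distrib]
    refine abs_le_of_sq_le_sq' ?_ (by positivity) |>.2
    calc ‖∑ i, b.piecewise s z i - ∑ i, z i‖ ^ 2
      _ ≤ #b * D ^ 2 := by simpa [hsum] using herr
      _ ≤ finrank ℝ E * D ^ 2 := by gcongr
      _ = (√(finrank ℝ E) * D) ^ 2 := by rw [mul_pow, Real.sq_sqrt (by positivity)]

end ShapleyFolkman

section VolumeIdentity

theorem exists_polynomial_eval_eq_det_one_add_smul {𝕜 V : Type*} [Field 𝕜] [AddCommGroup V]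
    [Module 𝕜 V] [FiniteDimensional 𝕜 V] (A : V →ₗ[𝕜] V) :
    ∃ P : Polynomial 𝕜, P.natDegree ≤ finrank 𝕜 V ∧ ∀ t, P.eval t = (1 + t • A).det := by
  let b := finBasis 𝕜 V
  let m := LinearMap.toMatrix b b A
  refine ⟨(Polynomial.X (R := 𝕜) • m.map Polynomial.C + (1 : Matrix _ _ 𝕜).map Polynomial.C).det,
    by simpa using Polynomial.natDegree_det_X_add_C_le m 1, fun t ↦ ?_⟩
  rw [← LinearMap.det_toMatrix b, ← Polynomial.coe_evalRingHom, RingHom.map_det,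
    map_add (LinearMap.toMatrix b b), map_smul, LinearMap.toMatrix_one]
  congr 1
  ext i j
  simp [m, Matrix.one_apply, apply_ite (Polynomial.eval t), add_comm, mul_comm t]

theorem integral_polynomial_eval_eq_of_infinite {Ω : Type*} [MeasurableSpace Ω] {μ : Measure Ω}
    {p : Ω → Polynomial ℝ} {N : ℕ} (hp : ∀ ω, (p ω).natDegree ≤ N) {s : Set ℝ} (hs : s.Infinite)
    (h_int : ∀ t ∈ s, Integrable (fun ω ↦ (p ω).eval t) μ) {c : ℝ}
    (hc : ∀ t ∈ s, ∫ ω, (p ω).eval t ∂μ = c) (t : ℝ) : ∫ ω, (p ω).eval t ∂μ = c := by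
  obtain ⟨u, hus, hcard⟩ := hs.exists_subset_card_eq (N + 1)
  have hinj : Set.InjOn id (u : Set ℝ) := Function.injective_id.injOn
  let ℓ (k : ℝ) : ℝ := (Lagrange.basis u id k).eval t
  have hℓ : ∑ k ∈ u, ℓ k = 1 := by
    rw [← Polynomial.eval_finsetSum, Lagrange.sum_basis hinj (card_pos.1 (by lia)),
      Polynomial.eval_one]
  have hinterp (ω : Ω) : (p ω).eval t = ∑ k ∈ u, (p ω).eval k * ℓ k := by
    have hdeg : (p ω).degree < #u := by
      rw [hcard]
      exact Polynomial.degree_le_natDegree.trans_lt (by exact_mod_cast Nat.lt_succ_of_le (hp ω))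
    conv_lhs => rw [Lagrange.eq_interpolate hinj hdeg]
    simp [Lagrange.interpolate_apply, Polynomial.eval_finsetSum, ℓ]
  calc ∫ ω, (p ω).eval t ∂μ
    _ = ∑ k ∈ u, (∫ ω, (p ω).eval k ∂μ) * ℓ k := by
      simp_rw [hinterp]
      rw [integral_finsetSum _ fun k hk ↦ (h_int k (hus hk)).mul_const _]
      simp_rw [integral_mul_const]
    _ = c := by rw [sum_congr rfl fun k hk ↦ by rw [hc k (hus hk)], ← mul_sum, hℓ, mul_one]

theorem bijective_id_add_of_lipschitzWith {V : Type*} [NormedAddCommGroup V] [CompleteSpace V]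
    {g : V → V} {L : NNReal} (hL : L < 1) (hg : LipschitzWith L g) :
    Function.Bijective fun x ↦ x + g x := by
  refine (Function.bijective_iff_existsUnique _).2 fun y ↦ ?_
  have hcontr : ContractingWith L fun x ↦ y - g x :=
    ⟨hL, LipschitzWith.of_dist_le_mul fun x x' ↦ by
      simpa only [dist_sub_left] using hg.dist_le_mul x x'⟩
  refine ⟨hcontr.fixedPoint, ?_, fun x hx ↦ hcontr.fixedPoint_unique ?_⟩
  · exact eq_sub_iff_add_eq.1 hcontr.fixedPoint_isFixedPt.symm
  · exact (eq_sub_of_add_eq hx).symm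

variable {E : Type*} [NormedAddCommGroup E] [NormedSpace ℝ E]

/-- A segment leaving `B` meets the frontier, where `h` vanishes. -/
theorem lipschitzWith_indicator_of_eqOn_frontier {F : Type*} [NormedAddCommGroup F] {B : Set E}
    (hB : IsClosed B) {h : E → F} {L : NNReal} (hL : LipschitzOnWith L h B)
    (h_frontier : ∀ x ∈ frontier B, h x = 0) : LipschitzWith L (B.indicator h) := by
  have hmixed : ∀ x ∈ B, ∀ y ∉ B, ‖h x‖ ≤ L * dist x y := by
    intro x hx y hy
    obtain ⟨z, hz, hzB⟩ : (segment ℝ x y ∩ frontier B).Nonempty := by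
      rw [frontier_eq_closure_inter_closure, hB.closure_eq]
      exact isPreconnected_closed_iff.1
        (convex_segment x y).isPreconnected B _ hB isClosed_closure
        (fun z _ ↦ (em (z ∈ B)).imp_right fun hz ↦ subset_closure hz)
        ⟨x, left_mem_segment ℝ x y, hx⟩ ⟨y, right_mem_segment ℝ x y, subset_closure hy⟩
    calc ‖h x‖
      _ = dist (h x) (h z) := by rw [h_frontier z hzB, dist_zero_right]
      _ ≤ L * dist x z := hL.dist_le_mul x hx z (hB.frontier_subset hzB)
      _ ≤ L * dist x y := by
        gcongr
        linarith [dist_add_dist_of_mem_segment hz, dist_nonneg (x := z) (y := y)]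
  refine LipschitzWith.of_dist_le_mul fun x y ↦ ?_
  by_cases hx : x ∈ B <;> by_cases hy : y ∈ B
  · simpa [hx, hy] using hL.dist_le_mul x hx y hy
  · simpa [hx, hy] using hmixed x hx y hy
  · simpa [hx, hy, dist_comm] using hmixed y hy x hx
  · simp only [hx, hy, not_false_eq_true, Set.indicator_of_notMem, dist_self]
    positivity

variable [FiniteDimensional ℝ E]

theorem det_one_add_pos_of_norm_lt_one {A : E →L[ℝ] E} (hA : ‖A‖ < 1) : 0 < (1 + A).det := by
  have hcont : ContinuousOn (fun t : ℝ ↦ (1 + t • A).det) (Set.Icc 0 1) :=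
    (ContinuousLinearMap.continuous_det.comp (by fun_prop)).continuousOn
  have hne : ∀ t ∈ Set.Icc (0 : ℝ) 1, (1 + t • A).det ≠ 0 := by
    intro t ht
    have hnorm : ‖-(t • A)‖ < 1 := by
      rw [norm_neg, norm_smul, Real.norm_of_nonneg ht.1]
      exact (mul_le_of_le_one_left (norm_nonneg A) ht.2).trans_lt hA
    have hunit : IsUnit (1 + t • A) := by simpa using isUnit_one_sub_of_norm_lt_one hnorm
    exact ((hunit.map ContinuousLinearMap.toLinearMapRingHom).map LinearMap.det).ne_zero
  by_contra! hneg
  obtain ⟨t, ht, hzero⟩ := intermediate_value_Icc' zero_le_one hcont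
    (show (0 : ℝ) ∈ Set.Icc _ _ by simpa [ContinuousLinearMap.det] using hneg)
  exact hne t ht hzero

variable [MeasurableSpace E] [BorelSpace E] {B : Set E} {h : E → E} {h' : E → E →L[ℝ] E}

theorem setIntegral_det_one_add_of_norm_le (μ : Measure E) [μ.IsAddHaarMeasure]
    (hB : IsClosed B) (hB_convex : Convex ℝ B) {L : NNReal} (hL : L < 1)
    (hderiv : ∀ x ∈ B, HasFDerivWithinAt h (h' x) B x) (h_norm : ∀ x ∈ B, ‖h' x‖₊ ≤ L)
    (h_frontier : ∀ x ∈ frontier B, h x = 0) :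
    ∫ x in B, (1 + h' x).det ∂μ = μ.real B := by
  let F : E → E := fun x ↦ x + B.indicator h x
  have hF_bij : F.Bijective := bijective_id_add_of_lipschitzWith hL <|
    lipschitzWith_indicator_of_eqOn_frontier hB
      (hB_convex.lipschitzOnWith_of_nnnorm_hasFDerivWithin_le hderiv h_norm) h_frontier
  have hF_image : F '' B = B := by
    have hcompl : F '' Bᶜ = Bᶜ := by
      have hF_id : Set.EqOn F id Bᶜ := fun x hx ↦ by simp [F, Set.indicator_of_notMem hx]
      rw [hF_id.image_eq, Set.image_id]
    rwa [Set.image_compl_eq hF_bij, compl_inj_iff] at hcompl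
  have hF_deriv : ∀ x ∈ B, HasFDerivWithinAt F (1 + h' x) B x := fun x hx ↦
    ((hasFDerivWithinAt_id x B).add (hderiv x hx)).congr
      (fun y hy ↦ by simp [F, hy]) (by simp [F, hx])
  calc ∫ x in B, (1 + h' x).det ∂μ
    _ = ∫ x in B, |(1 + h' x).det| • (1 : ℝ) ∂μ :=
      setIntegral_congr_fun hB.measurableSet fun x hx ↦ by
        have hnorm : ‖h' x‖ < 1 := (NNReal.coe_le_coe.2 (h_norm x hx)).trans_lt hL
        simp [abs_of_pos (det_one_add_pos_of_norm_lt_one hnorm)]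
    _ = ∫ _ in F '' B, (1 : ℝ) ∂μ :=
      (integral_image_eq_integral_abs_det_fderiv_smul μ hB.measurableSet hF_deriv
        hF_bij.injective.injOn fun _ ↦ (1 : ℝ)).symm
    _ = μ.real B := by simp [hF_image]

/-- For small `t` the map `x ↦ x + t • h x` permutes `B`, so the integral of its Jacobian is the
volume of `B`; as that integral is a polynomial in `t`, the same holds at `t = 1`. -/
theorem setIntegral_det_one_add (μ : Measure E) [μ.IsAddHaarMeasure]
    (hB : IsCompact B) (hB_convex : Convex ℝ B)
    (hderiv : ∀ x ∈ B, HasFDerivWithinAt h (h' x) B x) (h_cont : ContinuousOn h' B)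
    (h_frontier : ∀ x ∈ frontier B, h x = 0) :
    ∫ x in B, (1 + h' x).det ∂μ = μ.real B := by
  obtain ⟨C, hC⟩ := hB.exists_bound_of_continuousOn h_cont
  choose P hP_deg hP_eval using
    fun x ↦ exists_polynomial_eval_eq_det_one_add_smul (h' x : E →ₗ[ℝ] E)
  have hP (x : E) (t : ℝ) : (P x).eval t = (1 + t • h' x).det := hP_eval x t
  have hsmall : ∀ᶠ t : ℝ in 𝓝 0, |t| * C < 1 :=
    (by fun_prop : Continuous fun t : ℝ ↦ |t| * C).tendsto 0 |>.eventually_lt_const (by simp)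
  have hpolynomial := integral_polynomial_eval_eq_of_infinite (μ := μ.restrict B)
    (c := μ.real B) hP_deg (infinite_of_mem_nhds 0 hsmall) (fun t _ ↦ ?_) (fun t ht ↦ ?_) 1
  · simpa only [hP, one_smul] using hpolynomial
  · simp_rw [hP]
    exact (ContinuousLinearMap.continuous_det.comp_continuousOn
      (continuousOn_const.add (h_cont.const_smul t))).integrableOn_compact hB
  · simp_rw [hP]
    have hnorm : ∀ x ∈ B, ‖t • h' x‖₊ ≤ (|t| * C).toNNReal := fun x hx ↦ by
      rw [← norm_toNNReal]
      refine Real.toNNReal_le_toNNReal ?_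
      rw [norm_smul, Real.norm_eq_abs]
      gcongr
      exact hC x hx
    exact setIntegral_det_one_add_of_norm_le μ hB.isClosed hB_convex
      (Real.toNNReal_lt_one.2 ht) (fun x hx ↦ (hderiv x hx).const_smul t) hnorm
      fun x hx ↦ by simp [h_frontier x hx]

end VolumeIdentity

section Brouwer

variable {E : Type*} [NormedAddCommGroup E] [InnerProductSpace ℝ E] {R : ℝ}

theorem det_eq_zero_of_hasFDerivWithinAt_of_mapsTo_sphere [FiniteDimensional ℝ E] {r : E → E}
    {r' : E →L[ℝ] E} {s : Set E} {x : E} (hs : UniqueDiffWithinAt ℝ s x) (hx : x ∈ s)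
    (hr : HasFDerivWithinAt r r' s x) (hr_maps : Set.MapsTo r s (sphere 0 R)) (hR : R ≠ 0) :
    r'.det = 0 := by
  have hinner : HasFDerivWithinAt (fun y ↦ inner ℝ (r y) (r y)) (0 : E →L[ℝ] ℝ) s x :=
    (hasFDerivWithinAt_const (R ^ 2) x s).congr' (fun y hy ↦ by
      rw [real_inner_self_eq_norm_sq, mem_sphere_zero_iff_norm.1 (hr_maps hy)]) hx
  have horth (v : E) : inner ℝ (r x) (r' v) = 0 := by
    simpa [real_inner_comm (r x), ← two_mul] using
      DFunLike.congr_fun (hs.eq (hr.inner ℝ hr) hinner) v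
  by_contra hdet
  obtain ⟨v, hv⟩ := (LinearMap.equivOfDetNeZero (r' : E →ₗ[ℝ] E) hdet).surjective (r x)
  have hrx : r x = 0 := by
    rw [← inner_self_eq_zero (𝕜 := ℝ), ← horth v]
    exact congrArg _ hv.symm
  exact hR (by simpa [hrx, eq_comm] using hr_maps hx)

theorem not_eqOn_id_sphere_of_contDiffOn_of_mapsTo_sphere [FiniteDimensional ℝ E] (hR : 0 < R)
    {r : E → E} (hr : ContDiffOn ℝ 1 r (closedBall 0 R))
    (hr_maps : Set.MapsTo r (closedBall 0 R) (sphere 0 R)) :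
    ¬ Set.EqOn r id (sphere 0 R) := by
  intro h_id
  borelize E
  let μ : Measure E := Measure.addHaar
  set B : Set E := closedBall 0 R
  have hB_convex : Convex ℝ B := convex_closedBall 0 R
  have hunique : UniqueDiffOn ℝ B := uniqueDiffOn_convex hB_convex
    ⟨0, ball_subset_interior_closedBall (mem_ball_self hR)⟩
  have hderiv : ∀ x ∈ B, HasFDerivWithinAt r (fderivWithin ℝ r B x) B x := fun x hx ↦
    (hr.differentiableOn one_ne_zero x hx).hasFDerivWithinAt
  have hvolume : ∫ x in B, (1 + (fderivWithin ℝ r B x - 1)).det ∂μ = μ.real B :=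
    setIntegral_det_one_add μ (isCompact_closedBall 0 R) hB_convex
      (fun x hx ↦ (hderiv x hx).sub (hasFDerivWithinAt_id x B))
      ((hr.continuousOn_fderivWithin hunique le_rfl).sub continuousOn_const) fun x hx ↦ by
        rw [frontier_closedBall 0 hR.ne'] at hx
        simp [h_id hx]
  have hzero : ∫ x in B, (1 + (fderivWithin ℝ r B x - 1)).det ∂μ = 0 :=
    setIntegral_eq_zero_of_forall_eq_zero fun x hx ↦ by
      rw [add_sub_cancel]
      exact det_eq_zero_of_hasFDerivWithinAt_of_mapsTo_sphere (hunique x hx) hx (hderiv x hx)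
        hr_maps hR.ne'
  have hpos : 0 < μ.real B := ENNReal.toReal_pos (measure_closedBall_pos μ 0 hR).ne'
    (isCompact_closedBall 0 R).measure_lt_top.ne
  exact hpos.ne (hzero.symm.trans hvolume)

/-- A quarter of the discriminant of the quadratic equation `‖x + t • u‖ ^ 2 = R ^ 2` in `t`. -/
noncomputable def rayDiscrim (R : ℝ) (x u : E) : ℝ :=
  inner ℝ x u ^ 2 + ‖u‖ ^ 2 * (R ^ 2 - ‖x‖ ^ 2)

/-- The point at which the ray from `x` in the direction `u` leaves the ball of radius `R` about the
origin, for `u ≠ 0`: the parameter is the larger root of `‖x + t • u‖ ^ 2 = R ^ 2`. -/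
noncomputable def rayExit (R : ℝ) (x u : E) : E :=
  x + ((√(rayDiscrim R x u) - inner ℝ x u) / ‖u‖ ^ 2) • u

variable {x u : E}

theorem norm_rayExit (hR : 0 ≤ R) (hu : u ≠ 0) (h : 0 ≤ rayDiscrim R x u) :
    ‖rayExit R x u‖ = R := by
  have hu' : ‖u‖ ≠ 0 := norm_ne_zero_iff.2 hu
  have hroot : √(rayDiscrim R x u) ^ 2 = inner ℝ x u ^ 2 + ‖u‖ ^ 2 * (R ^ 2 - ‖x‖ ^ 2) :=
    Real.sq_sqrt h
  refine (sq_eq_sq₀ (norm_nonneg _) hR).1 ?_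
  rw [rayExit, norm_add_sq_real, norm_smul, inner_smul_right, mul_pow, Real.norm_eq_abs, sq_abs]
  field_simp
  linear_combination hroot

theorem rayExit_eq_self (hx : ‖x‖ = R) (hxu : 0 ≤ inner ℝ x u) : rayExit R x u = x := by
  simp [rayExit, rayDiscrim, hx, Real.sqrt_sq hxu]

theorem contDiffOn_rayExit {n : WithTop ℕ∞} {f g : E → E} {s : Set E} (hf : ContDiffOn ℝ n f s)
    (hg : ContDiffOn ℝ n g s) (hg_ne : ∀ x ∈ s, g x ≠ 0)
    (h : ∀ x ∈ s, rayDiscrim R (f x) (g x) ≠ 0) :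
    ContDiffOn ℝ n (fun x ↦ rayExit R (f x) (g x)) s := by
  have hinner := hf.inner ℝ hg
  have hdiscrim : ContDiffOn ℝ n (fun x ↦ rayDiscrim R (f x) (g x)) s :=
    (hinner.pow 2).add ((hg.norm_sq ℝ).mul (contDiffOn_const.sub (hf.norm_sq ℝ)))
  exact hf.add ((((hdiscrim.sqrt h).sub hinner).div (hg.norm_sq ℝ)
    fun x hx ↦ by simpa using hg_ne x hx).smul hg)

theorem inner_self_sub_pos_of_norm_le {y : E} (hxy : x ≠ y) (h : ‖y‖ ≤ ‖x‖) :
    0 < inner ℝ x (x - y) := by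
  have hpos : 0 < ‖x - y‖ ^ 2 := by have := sub_ne_zero.2 hxy; positivity
  rw [norm_sub_sq_real] at hpos
  rw [inner_sub_right, real_inner_self_eq_norm_sq]
  nlinarith [pow_le_pow_left₀ (norm_nonneg y) h 2]

theorem rayDiscrim_sub_pos {y : E} (hxy : x ≠ y) (hx : ‖x‖ ≤ R) (hy : ‖y‖ ≤ R) :
    0 < rayDiscrim R x (x - y) := by
  have hR : 0 ≤ R := (norm_nonneg x).trans hx
  rw [rayDiscrim]
  rcases hx.eq_or_lt with rfl | hx
  · have := inner_self_sub_pos_of_norm_le hxy hy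
    simpa using pow_pos this 2
  · have hu : 0 < ‖x - y‖ := norm_sub_pos_iff.2 hxy
    have : 0 < R ^ 2 - ‖x‖ ^ 2 := sub_pos.2 (by gcongr)
    positivity

/-- Without a fixed point, sending `x` to the exit point of the ray from `G x` through `x` would be
a `C¹` retraction of the ball onto the sphere. -/
theorem exists_isFixedPt_of_contDiffOn_closedBall [FiniteDimensional ℝ E] (hR : 0 < R) {G : E → E}
    (hG : ContDiffOn ℝ 1 G (closedBall 0 R))
    (hG_maps : Set.MapsTo G (closedBall 0 R) (closedBall 0 R)) :
    ∃ x ∈ closedBall 0 R, Function.IsFixedPt G x := by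
  by_contra! hne
  have hx_ne : ∀ x ∈ closedBall 0 R, x ≠ G x := fun x hx hfix ↦ hne x hx hfix.symm
  have hpos : ∀ x ∈ closedBall 0 R, 0 < rayDiscrim R x (x - G x) := fun x hx ↦
    rayDiscrim_sub_pos (hx_ne x hx) (mem_closedBall_zero_iff.1 hx)
      (mem_closedBall_zero_iff.1 (hG_maps hx))
  have hu_ne : ∀ x ∈ closedBall 0 R, x - G x ≠ 0 := fun x hx ↦ sub_ne_zero.2 (hx_ne x hx)
  refine not_eqOn_id_sphere_of_contDiffOn_of_mapsTo_sphere hR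
    (contDiffOn_rayExit contDiffOn_id (contDiffOn_id.sub hG) hu_ne fun x hx ↦ (hpos x hx).ne')
    (fun x hx ↦ mem_sphere_zero_iff_norm.2 (norm_rayExit hR.le (hu_ne x hx) (hpos x hx).le))
    fun x hx ↦ ?_
  have hxB := sphere_subset_closedBall hx
  have hxR : ‖x‖ = R := mem_sphere_zero_iff_norm.1 hx
  exact rayExit_eq_self hxR (inner_self_sub_pos_of_norm_le (hx_ne x hxB)
    (hxR ▸ mem_closedBall_zero_iff.1 (hG_maps hxB))).le

theorem exists_mem_self_of_convex_of_locally_const [FiniteDimensional ℝ E] {t : E → Set E}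
    (ht_convex : ∀ x, Convex ℝ (t x)) (ht_bdd : IsBounded (⋃ x, t x))
    (ht_const : ∀ x, ∃ c, ∀ᶠ y in 𝓝 x, c ∈ t y) : ∃ x, x ∈ t x := by
  obtain ⟨g, hg⟩ := exists_contMDiffMap_forall_mem_convex_of_local_const (n := 1)
    (modelWithCornersSelf ℝ E) ht_convex ht_const
  obtain ⟨R, hR, ht_ball⟩ := ht_bdd.subset_closedBall_lt 0 0
  obtain ⟨x, -, hx⟩ := exists_isFixedPt_of_contDiffOn_closedBall hR
    g.contMDiff.contDiff.contDiffOn fun y _ ↦ ht_ball (Set.mem_iUnion_of_mem y (hg y))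
  exact ⟨x, by simpa only [hx.eq] using hg x⟩

end Brouwer

section ApproxArgmin

variable {α : Type*} {η : ℝ} {s : Set α} {g : α → ℝ}

/-- The set of `η`-minimizers of `g` on `s`; with `g` the cost of a player against a fixed
aggregate, these are the approximate best responses of that player. -/
def approxArgmin (η : ℝ) (s : Set α) (g : α → ℝ) : Set α :=
  {x ∈ s | ∀ y ∈ s, g x ≤ g y + η}

theorem approxArgmin_subset : approxArgmin η s g ⊆ s :=
  Set.sep_subset s _

theorem nonempty_approxArgmin (hs : s.Nonempty) (hg : BddBelow (g '' s)) (hη : 0 < η) :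
    (approxArgmin η s g).Nonempty := by
  obtain ⟨_, ⟨x, hx, rfl⟩, hlt⟩ := Real.lt_sInf_add_pos (hs.image g) hη
  refine ⟨x, hx, fun y hy ↦ hlt.le.trans ?_⟩
  gcongr
  exact csInf_le hg (Set.mem_image_of_mem g hy)

theorem approxArgmin_subset_of_abs_sub_le {g' : α → ℝ} {η' δ : ℝ} (h : ∀ x ∈ s, |g' x - g x| ≤ δ)
    (hη : η + 2 * δ ≤ η') : approxArgmin η s g ⊆ approxArgmin η' s g' := fun x ⟨hx, hmin⟩ ↦
  ⟨hx, fun y hy ↦ by linarith [abs_le.1 (h x hx), abs_le.1 (h y hy), hmin y hy]⟩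

end ApproxArgmin

section SumAggregativeGame

variable {ι : Type*} {α : ι → Type*} {F : Type*}

/-- `x` is an additively `ε`-pure Nash equilibrium of the game with action sets `X` and costs `f`.
Feasibility of `x` is part of the definition. -/
def IsEpsilonPNE [DecidableEq ι] (X : ∀ i, Set (α i)) (f : ι → (∀ i, α i) → ℝ) (ε : ℝ)
    (x : ∀ i, α i) : Prop :=
  (∀ i, x i ∈ X i) ∧ ∀ i, ∀ y ∈ X i, f i x ≤ f i (Function.update x i y) + ε

/-- The cost of player `i` in a sum-aggregative game. Any normalization of the aggregate, such as
the factor `1 / n`, is part of the maps `a j`. -/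
def aggregateCost [Fintype ι] [AddCommMonoid F] (a : ∀ i, α i → F) (θ : ∀ i, α i → F → ℝ) (i : ι)
    (x : ∀ i, α i) : ℝ :=
  θ i (x i) (∑ j, a j (x j))

theorem sum_apply_update_sub_sum [Fintype ι] [DecidableEq ι] [AddCommGroup F] (a : ∀ i, α i → F)
    (x : ∀ i, α i) (i : ι) (z : α i) :
    ∑ j, a j (Function.update x i z j) - ∑ j, a j (x j) = a i z - a i (x i) := by
  rw [← sum_sub_distrib, Fintype.sum_eq_single i fun j hj ↦ by simp [hj], Function.update_self]

theorem tendstoUniformlyOn_of_abs_sub_le_mul_norm_rpow {β : Type*} [SeminormedAddCommGroup F]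
    {s : Set β} {φ : β → F → ℝ} {H γ : ℝ} (hγ : 0 < γ)
    (hφ : ∀ x ∈ s, ∀ y y', |φ x y' - φ x y| ≤ H * ‖y' - y‖ ^ γ) (y : F) :
    TendstoUniformlyOn (fun y' x ↦ φ x y') (φ · y) (𝓝 y) s := by
  have hlim : Tendsto (fun y' ↦ H * ‖y' - y‖ ^ γ) (𝓝 y) (𝓝 0) := by
    have hcont : Continuous fun y' : F ↦ H * ‖y' - y‖ ^ γ :=
      continuous_const.mul ((continuous_id.sub continuous_const).norm.rpow_const fun _ ↦ .inr hγ.le)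
    simpa [Real.zero_rpow hγ.ne'] using hcont.tendsto y
  refine Metric.tendstoUniformlyOn_iff.2 fun ε hε ↦ ?_
  filter_upwards [hlim.eventually_lt_const hε] with y' hy' x hx
  rw [dist_comm, Real.dist_eq]
  exact (hφ x hx y y').trans_lt hy'

variable [Fintype ι] [NormedAddCommGroup F] {X : ∀ i, Set (α i)}
  {a : ∀ i, α i → F} {θ : ∀ i, α i → F → ℝ} {H γ r η : ℝ}

theorem isEpsilonPNE_aggregateCost_of_norm_sub_le [DecidableEq ι] {x : ∀ i, α i} {y : F} {ρ : ℝ}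
    (hH : 0 ≤ H) (hγ : 0 ≤ γ) (ha : ∀ i, ∀ x ∈ X i, ∀ z ∈ X i, dist (a i x) (a i z) ≤ r)
    (hθ : ∀ i, ∀ x ∈ X i, ∀ y y', |θ i x y' - θ i x y| ≤ H * ‖y' - y‖ ^ γ)
    (hx : ∀ i, x i ∈ approxArgmin η (X i) (θ i · y)) (hxy : ‖∑ j, a j (x j) - y‖ ≤ ρ) :
    IsEpsilonPNE X (aggregateCost a θ) (H * ρ ^ γ + H * (ρ + r) ^ γ + η) x := by
  refine ⟨fun i ↦ (hx i).1, fun i z hz ↦ ?_⟩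
  set σ := ∑ j, a j (x j) with hσ
  set σ' := ∑ j, a j (Function.update x i z j) with hσ'
  have hxi : x i ∈ X i := (hx i).1
  have hσ'y : ‖σ' - y‖ ≤ ρ + r := calc
    ‖σ' - y‖ ≤ ‖σ - y‖ + ‖σ' - σ‖ := by
      simpa [add_comm] using norm_sub_le_norm_sub_add_norm_sub σ' σ y
    _ ≤ ρ + r := by
      gcongr
      rw [hσ', hσ, sum_apply_update_sub_sum, ← dist_eq_norm]
      exact ha i z hz _ hxi
  have hcost : θ i (x i) σ - θ i (x i) y ≤ H * ρ ^ γ :=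
    (le_abs_self _).trans <| (hθ i _ hxi y σ).trans <| by gcongr
  have hdeviation : θ i z y - θ i z σ' ≤ H * (ρ + r) ^ γ := by
    refine (le_abs_self _).trans <| abs_sub_comm (θ i z y) _ ▸ (hθ i z hz y σ').trans ?_
    gcongr
  have hbest : θ i (x i) y ≤ θ i z y + η := (hx i).2 z hz
  simp only [aggregateCost, Function.update_self]
  linarith

variable [InnerProductSpace ℝ F]

theorem exists_mem_convexHull_sum_image_approxArgmin [FiniteDimensional ℝ F]
    (hX : ∀ i, (X i).Nonempty) (ha : ∀ i, IsBounded (a i '' X i))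
    (hθ_bdd : ∀ i y, BddBelow ((θ i · y) '' X i))
    (hθ : ∀ i y, TendstoUniformlyOn (fun y' x ↦ θ i x y') (θ i · y) (𝓝 y) (X i)) (hη : 0 < η) :
    ∃ y, y ∈ convexHull ℝ (∑ i, a i '' approxArgmin η (X i) (θ i · y)) := by
  refine exists_mem_self_of_convex_of_locally_const (fun y ↦ convex_convexHull ℝ _) ?_ fun y ↦ ?_
  · have hbdd : IsBounded (∑ i, a i '' X i) :=
      Finset.sum_induction _ _ (fun _ _ ↦ IsBounded.add) isBounded_singleton fun i _ ↦ ha i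
    refine (isBounded_convexHull.2 hbdd).subset (Set.iUnion_subset fun y ↦ convexHull_mono ?_)
    exact Set.finsetSum_subset_finsetSum _ _ _ fun i _ ↦ Set.image_mono approxArgmin_subset
  · choose x hx using fun i ↦ nonempty_approxArgmin (hX i) (hθ_bdd i y) (half_pos hη)
    refine ⟨∑ i, a i (x i), ?_⟩
    have hclose := eventually_all.2 fun i ↦
      Metric.tendstoUniformlyOn_iff.1 (hθ i y) (η / 4) (by positivity)
    filter_upwards [hclose] with y' hy'
    refine subset_convexHull ℝ _ (Set.finsetSum_mem_finsetSum _ _ _ fun i _ ↦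
      Set.mem_image_of_mem _ ?_)
    refine approxArgmin_subset_of_abs_sub_le (g := (θ i · y)) (δ := η / 4) (fun z hz ↦ ?_)
      (by linarith) (hx i)
    rw [← Real.dist_eq, dist_comm]
    exact (hy' i z hz).le

variable [DecidableEq ι] [FiniteDimensional ℝ F]

theorem exists_isEpsilonPNE_aggregateCost (hH : 0 ≤ H) (hγ : 0 < γ) (hr : 0 ≤ r) (hη : 0 < η)
    (hX : ∀ i, (X i).Nonempty) (ha : ∀ i, ∀ x ∈ X i, ∀ z ∈ X i, dist (a i x) (a i z) ≤ r)
    (hθ_bdd : ∀ i y, BddBelow ((θ i · y) '' X i))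
    (hθ : ∀ i, ∀ x ∈ X i, ∀ y y', |θ i x y' - θ i x y| ≤ H * ‖y' - y‖ ^ γ) :
    ∃ x, IsEpsilonPNE X (aggregateCost a θ)
      (H * (√(finrank ℝ F) * r) ^ γ + H * (√(finrank ℝ F) * r + r) ^ γ + η) x := by
  have ha_bdd (i : ι) : IsBounded (a i '' X i) :=
    Metric.isBounded_iff.2 ⟨r, Set.forall_mem_image.2 fun x hx ↦ Set.forall_mem_image.2 (ha i x hx)⟩
  obtain ⟨y, hy⟩ := exists_mem_convexHull_sum_image_approxArgmin hX ha_bdd hθ_bdd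
    (fun i ↦ tendstoUniformlyOn_of_abs_sub_le_mul_norm_rpow hγ (hθ i)) hη
  obtain ⟨s, hs, hsy⟩ := shapley_folkman_starr hr (fun i ↦ Set.forall_mem_image.2 fun x hx ↦
    Set.forall_mem_image.2 fun z hz ↦
      ha i x (approxArgmin_subset hx) z (approxArgmin_subset hz)) hy
  choose x hx hxs using hs
  refine ⟨x, isEpsilonPNE_aggregateCost_of_norm_sub_le hH hγ.le ha hθ hx ?_⟩
  simpa only [hxs] using hsy

/-- The gap between `√(finrank ℝ F)` and `√(finrank ℝ F) + 1` pays for the errors of the approximate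
best responses. -/
theorem exists_epsilon_PNE_general (hH : 0 < H) (hγ : 0 < γ) (hr : 0 < r)
    (hX : ∀ i, (X i).Nonempty) (ha : ∀ i, ∀ x ∈ X i, ∀ z ∈ X i, dist (a i x) (a i z) ≤ r)
    (hθ_bdd : ∀ i y, BddBelow ((θ i · y) '' X i))
    (hθ : ∀ i, ∀ x ∈ X i, ∀ y y', |θ i x y' - θ i x y| ≤ H * ‖y' - y‖ ^ γ) :
    ∃ x, IsEpsilonPNE X (aggregateCost a θ) (2 * H * ((√(finrank ℝ F) + 1) * r) ^ γ) x := by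
  let c := √(finrank ℝ F)
  have hslack : H * (c * r) ^ γ < H * (c * r + r) ^ γ := by
    gcongr
    linarith
  obtain ⟨x, hx⟩ :=
    exists_isEpsilonPNE_aggregateCost hH.le hγ hr.le (sub_pos.2 hslack) hX ha hθ_bdd hθ
  refine ⟨x, ?_⟩
  have hε : 2 * H * ((c + 1) * r) ^ γ = H * (c * r) ^ γ + H * (c * r + r) ^ γ +
      (H * (c * r + r) ^ γ - H * (c * r) ^ γ) := by rw [add_one_mul]; ring
  exact hε ▸ hx

end SumAggregativeGame

theorem dist_inv_smul_apply_le {V W : Type*} [SeminormedAddCommGroup V] [NormedSpace ℝ V]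
    [SeminormedAddCommGroup W] [NormedSpace ℝ W] {A : V →L[ℝ] W} {s : Set V} {M D c : ℝ}
    (hc : 0 ≤ c) (hs : IsBounded s) (hA : ‖A‖ ≤ M) (hD : diam s ≤ D) {x z : V} (hx : x ∈ s)
    (hz : z ∈ s) :
    dist (c⁻¹ • A x) (c⁻¹ • A z) ≤ M * D / c := by
  have hxz : ‖x - z‖ ≤ D := by
    rw [← dist_eq_norm]
    exact (dist_le_diam_of_mem hs hx hz).trans hD
  rw [dist_smul₀, dist_eq_norm, ← map_sub, Real.norm_of_nonneg (inv_nonneg.2 hc), ← div_eq_inv_mul]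
  gcongr
  exact A.le_of_opNorm_le_of_le hA hxz

/-- Existence of an additively `ε`-pure Nash equilibrium, with
`ε = 2H((√q + 1)MΔ/n)^γ`, in the nonconvex sum-aggregative game `Γ`. -/
theorem exists_epsilon_PNE (n q d : ℕ) (hn : 0 < n) (M Δ H γ : ℝ)
    (hM : 0 < M) (hΔ : 0 < Δ) (hH : 0 < H) (hγ : 0 < γ)
    (X : Fin n → Set (EuclideanSpace ℝ (Fin d)))
    (hXne : ∀ i, (X i).Nonempty)
    (hXcp : ∀ i, IsCompact (X i)) (hXd : ∀ i, Metric.diam (X i) ≤ Δ)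
    (A : Fin n → EuclideanSpace ℝ (Fin d) →L[ℝ] EuclideanSpace ℝ (Fin q))
    (hA : ∀ i, ‖A i‖ ≤ M)
    (θ : Fin n → EuclideanSpace ℝ (Fin d) → EuclideanSpace ℝ (Fin q) → ℝ)
    (hlsc : ∀ i y, LowerSemicontinuousOn (fun xi => θ i xi y) (X i))
    (hHolder : ∀ i xi y y', |θ i xi y' - θ i xi y| ≤ H * ‖y' - y‖ ^ γ)
    (f : Fin n → (Fin n → EuclideanSpace ℝ (Fin d)) → ℝ)
    (hf : ∀ i x, f i x = θ i (x i) ((n : ℝ)⁻¹ • ∑ j, A j (x j))) :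
    ∃ x : Fin n → EuclideanSpace ℝ (Fin d), (∀ i, x i ∈ X i) ∧
      ∀ i, ∀ y ∈ X i, f i x ≤ f i (Function.update x i y) +
        2 * H * ((Real.sqrt q + 1) * M * Δ / n) ^ γ := by
  obtain ⟨x, hx⟩ := exists_epsilon_PNE_general (a := fun j x ↦ (n : ℝ)⁻¹ • A j x) hH hγ
    (by positivity : 0 < M * Δ / n) hXne
    (fun i _ hx _ hz ↦ dist_inv_smul_apply_le n.cast_nonneg (hXcp i).isBounded (hA i) (hXd i) hx hz)
    (fun i y ↦ (hlsc i y).bddBelow_of_isCompact (hXcp i)) fun i x _ ↦ hHolder i x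
  refine ⟨x, hx.1, fun i y hy ↦ ?_⟩
  simpa [hf, aggregateCost, Finset.smul_sum, mul_div_assoc, mul_assoc] using hx.2 i y hy
end
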